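/- If 𝔱 = 𝔠, then there exist minimal right ideals I and J of (βℕ, +) such that I is a P-set in ℕ* and J is not a P-set in ℕ*; consequently no autohomeomorphism of ℕ* maps I onto J. -/

import Mathlib

open Filter Set Topology

noncomputable section

/-- `βℕ`: the space of ultrafilters on `ℕ` (the Stone–Čech compactification of `ℕ`). -/
abbrev βN := Ultrafilter ℕ

/-- `ℕ* = βℕ ∖ ℕ`: the free (nonprincipal) ultrafilters, i.e. those containing
every cofinite set. -/
def NStar : Set βN := {p | (p : Filter ℕ) ≤ Filter.cofinite}

/-- The shift map `σ : βℕ → βℕ`, the pushforward under `n ↦ n + 1`. -/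
def shift (p : βN) : βN := p.map (· + 1)

/-- Addition on `βℕ`: `A ∈ p + q ↔ {n | A − n ∈ p} ∈ q`, where `A − n = {m | m + n ∈ A}`. -/
def addU (p q : βN) : βN := q.bind fun n => p.map (· + n)

/-- A right ideal of `(βℕ, +)`: `I + βℕ ⊆ I`. -/
def IsRightIdeal (I : Set βN) : Prop := ∀ p ∈ I, ∀ q : βN, addU p q ∈ I

/-- A minimal right ideal: a nonempty right ideal not properly containing any
other (nonempty) right ideal. -/
def IsMinRightIdeal (I : Set βN) : Prop :=
  I.Nonempty ∧ IsRightIdeal I ∧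
    ∀ J : Set βN, J.Nonempty → IsRightIdeal J → J ⊆ I → J = I

/-- `A* = {p ∈ ℕ* | A ∈ p}`, as a subset of the subspace `ℕ*`. -/
def starSet (A : Set ℕ) : Set ↥NStar := {p | A ∈ (p : βN)}

/-- `F* = ⋂_{A ∈ F} A*` for a (free) filter `F` on `ℕ`. -/
def filterStar (F : Filter ℕ) : Set βN := ⋂ A ∈ F, {p : βN | A ∈ p}

/-- A closed `P`-set of the space `ℕ*`: for every countable collection of open
sets containing `X`, `X` is contained in the interior of the intersection. -/
def IsPSetSub (X : Set ↥NStar) : Prop :=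
  IsClosed X ∧ ∀ 𝒜 : Set (Set ↥NStar), 𝒜.Countable →
    (∀ U ∈ 𝒜, IsOpen U ∧ X ⊆ U) → X ⊆ interior (⋂₀ 𝒜)

/-- A subset of `βℕ` which lies in `ℕ*` and is a closed `P`-set of `ℕ*`. -/
def IsPSetIn (X : Set βN) : Prop :=
  X ⊆ NStar ∧ IsPSetSub (Subtype.val ⁻¹' X)

/-- `A ⊆ ℕ` is thick if it contains arbitrarily long intervals. -/
def Thick (A : Set ℕ) : Prop := ∀ k : ℕ, ∃ n : ℕ, Set.Icc n (n + k) ⊆ A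

/-- `A ⊆* B`: `A ∖ B` is finite. -/
def almostSub (A B : Set ℕ) : Prop := (A \ B).Finite

/-- The tower number `𝔱`: the least cardinality of a `⊆*`-chain of infinite subsets
of `ℕ` with no infinite pseudo-intersection. -/
def towerNum : Cardinal :=
  sInf {c : Cardinal | ∃ C : Set (Set ℕ), c = Cardinal.mk ↥C ∧ (∀ A ∈ C, A.Infinite) ∧
    IsChain almostSub C ∧ ¬∃ B : Set ℕ, B.Infinite ∧ ∀ A ∈ C, almostSub B A}

/-- `𝔱_Θ`: the least cardinality of a `⊆*`-chain of thick subsets of `ℕ` with no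
thick `⊆*`-lower bound. -/
def towerNumTheta : Cardinal :=
  sInf {c : Cardinal | ∃ C : Set (Set ℕ), c = Cardinal.mk ↥C ∧ (∀ A ∈ C, Thick A) ∧
    IsChain almostSub C ∧ ¬∃ B : Set ℕ, Thick B ∧ ∀ A ∈ C, almostSub B A}

/-- The pseudo-intersection number `𝔭`: the least cardinality of a filter base of
infinite subsets of `ℕ` (all finite intersections infinite) with no infinite
pseudo-intersection. -/
def pNum : Cardinal :=
  sInf {c : Cardinal | ∃ C : Set (Set ℕ), c = Cardinal.mk ↥C ∧
    (∀ S : Finset (Set ℕ), ↑S ⊆ C → (⋂ A ∈ S, A : Set ℕ).Infinite) ∧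
    ¬∃ B : Set ℕ, B.Infinite ∧ ∀ A ∈ C, almostSub B A}

/-- Chain transitivity for a dynamical system on a topological space, via open
covers: for every open cover `𝒰` and all `x, y` there is a `𝒰`-chain from `x` to `y`. -/
def ChainTransitive {X : Type*} [TopologicalSpace X] (f : X → X) : Prop :=
  ∀ 𝒰 : Set (Set X), (∀ U ∈ 𝒰, IsOpen U) → ⋃₀ 𝒰 = Set.univ →
    ∀ x y : X, ∃ (n : ℕ) (c : ℕ → X), c 0 = x ∧ c n = y ∧
      ∀ i < n, ∃ U ∈ 𝒰, f (c i) ∈ U ∧ c (i + 1) ∈ U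

lemma shift_mem_NStar {p : βN} (hp : p ∈ NStar) : shift p ∈ NStar := by
  have h1 : Filter.Tendsto (· + 1) Filter.cofinite Filter.cofinite :=
    Function.Injective.tendsto_cofinite (add_left_injective 1)
  simp only [NStar, Set.mem_setOf_eq, shift, Ultrafilter.coe_map] at *
  exact (Filter.map_mono hp).trans h1

/-- The shift map restricted to `ℕ*`. -/
def shiftStar (p : ↥NStar) : ↥NStar := ⟨shift p.1, shift_mem_NStar p.2⟩

/-!
For a filter `F` all of whose members are thick, `F*` contains a minimal right ideal, because some
translate-invariant ultrafilter lies above `F`; conversely a set belonging to every point of a right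
ideal is thick. By compactness, a closed `X ⊆ ℕ*` is a `P`-set if and only if countably many sets
whose stars contain `X` always have a common `⊆*`-lower bound whose star contains `X`.

`J`: let `A 0, A 1, …` be disjoint thick sets and let `F` consist of the sets which contain almost
all of `A n` for almost all `n`. Every `(A n)ᶜ` is in `F`, but a set almost disjoint from every
`A n` has its complement in `F`, so no right ideal inside `F*` is a `P`-set.

`I`: `𝔱 = 𝔠` yields a `⊆*`-tower of thick sets of length `𝔠` which decides every `X ⊆ ℕ`. A minimal
right ideal inside the star of the tower is contained in `X*` only if some member of the tower is
contained in `X`, and `cof 𝔠 > ℵ₀`. Such a tower can be built because towers of thick sets of length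
`< 𝔱` have thick lower bounds: since `𝔱 ≤ 𝔟`, a single `r → ∞` works for which every member `A` of
the tower contains `[n, n + r n]` for infinitely many `n`, and these `n` form a tower of infinite
sets.
-/

section AlmostSub

variable {A B C : Set ℕ}

lemma almostSub_iff_eventually : almostSub A B ↔ ∀ᶠ n in atTop, n ∈ A → n ∈ B := by
  simp only [← Nat.cofinite_eq_atTop, eventually_cofinite, Classical.not_imp]
  rfl

lemma almostSub_iff_mem : almostSub A B ↔ B ∈ cofinite ⊓ 𝓟 A := by
  rw [mem_inf_principal, almostSub_iff_eventually, ← Nat.cofinite_eq_atTop]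
  rfl

lemma almostSub_of_subset (h : A ⊆ B) : almostSub A B :=
  almostSub_iff_eventually.2 (.of_forall fun _ hn ↦ h hn)

lemma almostSub.trans (hAB : almostSub A B) (hBC : almostSub B C) : almostSub A C := by
  rw [almostSub_iff_eventually] at *
  filter_upwards [hAB, hBC] with n hAB hBC hn using hBC (hAB hn)

lemma starSet_subset_starSet_iff : starSet A ⊆ starSet B ↔ almostSub A B := by
  rw [almostSub_iff_mem, ← le_principal_iff, le_iff_ultrafilter]
  constructor
  · intro h p hp
    obtain ⟨hp, hpA⟩ := le_inf_iff.1 hp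
    exact le_principal_iff.2 (h (a := ⟨p, hp⟩) (le_principal_iff.1 hpA))
  · exact fun h p hp ↦ le_principal_iff.1 (h p (le_inf p.2 (le_principal_iff.2 hp)))

end AlmostSub

section Thick

variable {A B : Set ℕ}

lemma Thick.exists_ge (hA : Thick A) (N k : ℕ) : ∃ n ≥ N, Icc n (n + k) ⊆ A := by
  obtain ⟨n, hn⟩ := hA (N + k)
  exact ⟨n + N, by omega, (Icc_subset_Icc (by omega) (by omega)).trans hn⟩

lemma Thick.of_almostSub (hA : Thick A) (h : almostSub A B) : Thick B := by
  intro k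
  obtain ⟨N, hN⟩ := eventually_atTop.1 (almostSub_iff_eventually.1 h)
  obtain ⟨n, hNn, hn⟩ := hA.exists_ge N k
  exact ⟨n, fun m hm ↦ hN m (hNn.trans hm.1) (hn hm)⟩

lemma exists_pairwise_disjoint_thick :
    ∃ A : ℕ → Set ℕ, (∀ n, Thick (A n)) ∧ Pairwise (Function.onFun Disjoint A) := by
  refine ⟨fun n ↦ {m | m.sqrt.unpair.1 = n}, fun n k ↦ ?_, fun n l hne ↦ ?_⟩
  · -- `√m = pair n k` for all `m` in `[s², s² + k]`, where `s = pair n k ≥ k`.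
    refine ⟨Nat.pair n k * Nat.pair n k, fun m hm ↦ ?_⟩
    have hk : k ≤ Nat.pair n k := Nat.right_le_pair n k
    obtain ⟨j, rfl⟩ := Nat.exists_eq_add_of_le hm.1
    have hj : j ≤ k := by simpa using hm.2
    have hsqrt : (Nat.pair n k * Nat.pair n k + j).sqrt = Nat.pair n k :=
      Nat.sqrt_add_eq _ (by omega)
    simp [hsqrt]
  · exact disjoint_left.2 fun m hmn hml ↦ hne (hmn.symm.trans hml)

end Thick

section Addition

lemma mem_addU {p q : βN} {A : Set ℕ} : A ∈ addU p q ↔ {n | {m | m + n ∈ A} ∈ p} ∈ q := Iff.rfl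

lemma mem_addU_pure {p : βN} {n : ℕ} {A : Set ℕ} :
    A ∈ addU p (pure n) ↔ {m | m + n ∈ A} ∈ p := Iff.rfl

lemma addU_assoc (p q r : βN) : addU (addU p q) r = addU p (addU q r) := by
  ext A
  simp only [mem_addU, mem_ofPred_eq, add_assoc]

lemma continuous_addU (p : βN) : Continuous (addU p) :=
  ultrafilterBasis_is_basis.continuous_iff.2 <| forall_mem_range.2 fun A ↦
    ultrafilter_isOpen_basic {n | {m | m + n ∈ A} ∈ p}

lemma isClosed_range_addU (p : βN) : IsClosed (range (addU p)) :=
  (isCompact_range (continuous_addU p)).isClosed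

lemma isRightIdeal_range_addU (p : βN) : IsRightIdeal (range (addU p)) := by
  rintro _ ⟨q, rfl⟩ r
  exact ⟨addU q r, (addU_assoc p q r).symm⟩

lemma exists_isMinRightIdeal_subset {K : Set βN} (hne : K.Nonempty) (hcl : IsClosed K)
    (hK : IsRightIdeal K) : ∃ M ⊆ K, IsClosed M ∧ IsMinRightIdeal M := by
  obtain ⟨M, hMK, hM⟩ := zorn_superset_nonempty
    {L : Set βN | L.Nonempty ∧ IsClosed L ∧ IsRightIdeal L}
    (fun c hc hchain hcne ↦ by
      have : Nonempty c := hcne.to_subtype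
      refine ⟨⋂₀ c, ⟨?_, isClosed_sInter fun s hs ↦ (hc hs).2.1, fun p hp q s hs ↦
        (hc hs).2.2 p (hp s hs) q⟩, fun s hs ↦ sInter_subset_of_mem hs⟩
      have hdir : DirectedOn (· ⊇ ·) c := fun s hs t ht ↦ (hchain.total hs ht).elim
        (fun hst ↦ ⟨s, hs, subset_rfl, hst⟩) fun hts ↦ ⟨t, ht, hts, subset_rfl⟩
      exact IsCompact.nonempty_sInter_of_directed_nonempty_isCompact_isClosed
        hdir (fun s hs ↦ (hc hs).1) (fun s hs ↦ (hc hs).2.1.isCompact)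
        (fun s hs ↦ (hc hs).2.1))
    K ⟨hne, hcl, hK⟩
  refine ⟨M, hMK, hM.prop.2.1, hM.prop.1, hM.prop.2.2, fun J ⟨p, hp⟩ hJ hJM ↦ ?_⟩
  -- `J` need not be closed, but `p + βℕ ⊆ J` is.
  have hpJ : range (addU p) ⊆ J := range_subset_iff.2 (hJ p hp)
  have hMp : M ⊆ range (addU p) := hM.le_of_le
    ⟨range_nonempty _, isClosed_range_addU p, isRightIdeal_range_addU p⟩ (hpJ.trans hJM)
  exact hJM.antisymm (hMp.trans hpJ)

end Addition

section FilterStar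

variable {F : Filter ℕ}

lemma mem_filterStar {p : βN} : p ∈ filterStar F ↔ (p : Filter ℕ) ≤ F := mem_iInter₂

lemma exists_forall_translate_mem (hF : ∀ A ∈ F, Thick A) :
    ∃ p : βN, ∀ A ∈ F, ∀ n, {m | m + n ∈ A} ∈ p := by
  let G (k : ℕ) : Filter ℕ := F.lift' fun A ↦ {m | Icc m (m + k) ⊆ A}
  have hmono (k : ℕ) : Monotone fun A : Set ℕ ↦ {m | Icc m (m + k) ⊆ A} :=
    fun A B hAB m hm ↦ hm.trans hAB
  have hG : Antitone G := fun k l hkl ↦ lift'_mono le_rfl fun A m hm ↦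
    (Icc_subset_Icc_right (by omega)).trans hm
  have : (⨅ k, G k).NeBot := iInf_neBot_of_directed' hG.directed_ge fun k ↦
    (lift'_neBot_iff (hmono k)).2 fun A hA ↦ hF A hA k
  refine ⟨Ultrafilter.of (⨅ k, G k), fun A hA n ↦ ?_⟩
  have hAn : {m | Icc m (m + n) ⊆ A} ∈ ⨅ k, G k := mem_iInf_of_mem n (mem_lift' hA)
  filter_upwards [Ultrafilter.of_le _ hAn] with m hm using hm ⟨by omega, le_rfl⟩

lemma exists_isMinRightIdeal_subset_filterStar (hF : ∀ A ∈ F, Thick A) :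
    ∃ M ⊆ filterStar F, IsClosed M ∧ IsMinRightIdeal M := by
  obtain ⟨p, hp⟩ := exists_forall_translate_mem hF
  have hpF : range (addU p) ⊆ filterStar F :=
    range_subset_iff.2 fun q ↦ mem_filterStar.2 fun A hA ↦ mem_addU.2 (univ_mem' (hp A hA))
  obtain ⟨M, hMp, hM⟩ := exists_isMinRightIdeal_subset (range_nonempty _) (isClosed_range_addU p)
    (isRightIdeal_range_addU p)
  exact ⟨M, hMp.trans hpF, hM⟩

lemma IsRightIdeal.thick {I : Set βN} {A : Set ℕ} (hI : IsRightIdeal I) (hne : I.Nonempty)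
    (hA : ∀ p ∈ I, A ∈ p) : Thick A := by
  obtain ⟨p, hp⟩ := hne
  intro k
  have htranslate (i : ℕ) : ∀ᶠ n in (p : Filter ℕ), n + i ∈ A :=
    mem_addU_pure.1 (hA _ (hI p hp (pure i)))
  obtain ⟨n, hn⟩ := ((eventually_all_finite (finite_Iic k)).2 fun i _ ↦ htranslate i).exists
  refine ⟨n, fun m hm ↦ ?_⟩
  simpa [Nat.add_sub_of_le hm.1] using hn (m - n) (tsub_le_iff_left.2 hm.2)

end FilterStar

section PSet

lemma isOpen_starSet (A : Set ℕ) : IsOpen (starSet A) :=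
  (ultrafilter_isOpen_basic A).preimage continuous_subtype_val

lemma isClosed_NStar : IsClosed NStar := by
  have : NStar = filterStar cofinite := by
    ext p
    exact mem_filterStar.symm
  rw [this]
  exact isClosed_biInter fun A _ ↦ ultrafilter_isClosed_basic A

variable {X : Set ↥NStar}

lemma exists_starSet_between {U : Set ↥NStar} (hX : IsClosed X) (hU : IsOpen U) (hXU : X ⊆ U) :
    ∃ A, X ⊆ starSet A ∧ starSet A ⊆ U := by
  have : CompactSpace ↥NStar := isCompact_iff_compactSpace.1 isClosed_NStar.isCompact
  refine hX.isCompact.induction_on (p := fun Y ↦ ∃ A, Y ⊆ starSet A ∧ starSet A ⊆ U)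
    ⟨∅, empty_subset _, fun p hp ↦ (Ultrafilter.empty_notMem hp).elim⟩
    (fun Y Z hYZ ⟨A, hZA, hAU⟩ ↦ ⟨A, hYZ.trans hZA, hAU⟩) ?_ fun p hp ↦ ?_
  · rintro Y Z ⟨A, hYA, hAU⟩ ⟨B, hZB, hBU⟩
    refine ⟨A ∪ B, union_subset (fun p hp ↦ ?_) fun p hp ↦ ?_, fun p hp ↦ ?_⟩
    · exact mem_of_superset (hYA hp) subset_union_left
    · exact mem_of_superset (hZB hp) subset_union_right
    · exact (Ultrafilter.union_mem_iff.1 hp).elim (hAU ·) (hBU ·)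
  · obtain ⟨_, ⟨_, ⟨A, rfl⟩, rfl⟩, hpA, hAU⟩ :=
      (ultrafilterBasis_is_basis.induced Subtype.val).exists_subset_of_mem_open (hXU hp) hU
    exact ⟨starSet A, mem_nhdsWithin_of_mem_nhds ((isOpen_starSet A).mem_nhds hpA), A,
      subset_rfl, hAU⟩

lemma isPSetSub_iff (hX : IsClosed X) :
    IsPSetSub X ↔ ∀ 𝓑 : Set (Set ℕ), 𝓑.Countable → (∀ B ∈ 𝓑, X ⊆ starSet B) →
      ∃ A, X ⊆ starSet A ∧ ∀ B ∈ 𝓑, almostSub A B := by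
  constructor
  · rintro ⟨-, hP⟩ 𝓑 hcount h𝓑
    have hint : X ⊆ interior (⋂₀ (starSet '' 𝓑)) := hP _ (hcount.image _) <|
      forall_mem_image.2 fun B hB ↦ ⟨isOpen_starSet B, h𝓑 B hB⟩
    obtain ⟨A, hXA, hA⟩ := exists_starSet_between hX isOpen_interior hint
    refine ⟨A, hXA, fun B hB ↦ starSet_subset_starSet_iff.1 ?_⟩
    exact hA.trans (interior_subset.trans (sInter_subset_of_mem (mem_image_of_mem _ hB)))
  · refine fun h ↦ ⟨hX, fun 𝒜 hcount h𝒜 ↦ ?_⟩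
    choose! B hXB hBU using fun U hU ↦ exists_starSet_between hX (h𝒜 U hU).1 (h𝒜 U hU).2
    obtain ⟨A, hXA, hA⟩ := h (B '' 𝒜) (hcount.image B) (forall_mem_image.2 hXB)
    refine hXA.trans (interior_maximal (subset_sInter fun U hU ↦ ?_) (isOpen_starSet A))
    exact (starSet_subset_starSet_iff.2 (hA _ (mem_image_of_mem B hU))).trans (hBU U hU)

lemma IsPSetSub.image (hX : IsPSetSub X) (e : ↥NStar ≃ₜ ↥NStar) : IsPSetSub (e '' X) := by
  refine ⟨e.isClosed_image.2 hX.1, fun 𝒜 hcount h𝒜 ↦ ?_⟩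
  have hpre : X ⊆ interior (⋂₀ (preimage e '' 𝒜)) := hX.2 _ (hcount.image _) <|
    forall_mem_image.2 fun U hU ↦
      ⟨(h𝒜 U hU).1.preimage e.continuous, image_subset_iff.1 (h𝒜 U hU).2⟩
  rwa [image_subset_iff, e.preimage_interior, sInter_eq_biInter, preimage_iInter₂,
    ← sInter_image]

end PSet

lemma exists_isMinRightIdeal_not_isPSetIn :
    ∃ J, IsMinRightIdeal J ∧ J ⊆ NStar ∧ ¬ IsPSetIn J := by
  obtain ⟨A, hthick, hdisj⟩ := exists_pairwise_disjoint_thick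
  let F : Filter ℕ := atTop.bind fun n ↦ cofinite ⊓ 𝓟 (A n)
  have mem_F {X : Set ℕ} : X ∈ F ↔ ∀ᶠ n in atTop, almostSub (A n) X := by
    simp only [almostSub_iff_mem]
    exact mem_bind'
  obtain ⟨J, hJF, hJc, hJ⟩ := exists_isMinRightIdeal_subset_filterStar (F := F) fun X hX ↦
    let ⟨n, hn⟩ := (mem_F.1 hX).exists
    (hthick n).of_almostSub hn
  have hJmem {X : Set ℕ} (hX : X ∈ F) (p : βN) (hp : p ∈ J) : X ∈ p :=
    mem_filterStar.1 (hJF hp) hX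
  have hF : F ≤ cofinite := bind_le (.of_forall fun n ↦ inf_le_left)
  have hJN : J ⊆ NStar := fun p hp ↦ (mem_filterStar.1 (hJF hp)).trans hF
  refine ⟨J, hJ, hJN, fun ⟨_, hP⟩ ↦ ?_⟩
  have hcompl (n : ℕ) : (A n)ᶜ ∈ F := mem_F.2 <| (eventually_ne_atTop n).mono fun k hk ↦
    almostSub_of_subset (hdisj hk).subset_compl_right
  obtain ⟨B, hJB, hB⟩ := (isPSetSub_iff (hJc.preimage continuous_subtype_val)).1 hP
    (range fun n ↦ (A n)ᶜ) (countable_range _)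
    (forall_mem_range.2 fun n p hp ↦ hJmem (hcompl n) p hp)
  have hBc : Bᶜ ∈ F := mem_F.2 <| .of_forall fun n ↦ by
    rw [almostSub, sdiff_compl, inter_comm, ← sdiff_compl]
    exact hB _ (mem_range_self n)
  obtain ⟨p, hp⟩ := hJ.1
  exact Ultrafilter.compl_mem_iff_notMem.1 (hJmem hBc p hp) (hJB (a := ⟨p, hJN hp⟩) hp)

/-- A transfinite `⊆*`-tower: a family of sets of naturals indexed by a (usually well-ordered) type
and decreasing modulo finite sets. -/
def IsTower {ι : Type*} [LT ι] (A : ι → Set ℕ) : Prop :=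
  ∀ ⦃i j⦄, i < j → almostSub (A j) (A i)

section Tower

variable {ι : Type*} [LinearOrder ι] {A : ι → Set ℕ}

lemma IsTower.almostSub_of_le (hA : IsTower A) {i j : ι} (hij : i ≤ j) :
    almostSub (A j) (A i) := by
  rcases hij.eq_or_lt with rfl | hlt
  · exact almostSub_of_subset subset_rfl
  · exact hA hlt

lemma IsTower.mem_iInf [Nonempty ι] (hA : IsTower A) {X : Set ℕ} :
    X ∈ ⨅ i, cofinite ⊓ 𝓟 (A i) ↔ ∃ i, almostSub (A i) X := by
  have hanti : Antitone fun i ↦ cofinite ⊓ 𝓟 (A i) := fun i j hij ↦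
    le_inf inf_le_left (le_principal_iff.2 (almostSub_iff_mem.1 (hA.almostSub_of_le hij)))
  simp only [mem_iInf_of_directed hanti.directed_ge, almostSub_iff_mem]

lemma IsTower.exists_isMinRightIdeal_isPSetIn (hA : IsTower A) (hthick : ∀ i, Thick (A i))
    (hdecides : ∀ X, ∃ i, A i ⊆ X ∨ ¬ Thick (A i ∩ X))
    (hbdd : ∀ s : Set ι, s.Countable → BddAbove s) : ∃ I, IsMinRightIdeal I ∧ IsPSetIn I := by
  have : Nonempty ι := ⟨(hdecides univ).choose⟩
  let F : Filter ℕ := ⨅ i, cofinite ⊓ 𝓟 (A i)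
  obtain ⟨I, hIF, hIc, hI⟩ := exists_isMinRightIdeal_subset_filterStar (F := F) fun X hX ↦
    let ⟨i, hi⟩ := hA.mem_iInf.1 hX
    (hthick i).of_almostSub hi
  have hAI (i : ι) (p : βN) (hp : p ∈ I) : A i ∈ p :=
    mem_filterStar.1 (hIF hp) (hA.mem_iInf.2 ⟨i, almostSub_of_subset subset_rfl⟩)
  have hF : F ≤ cofinite := iInf_le_of_le (Classical.arbitrary ι) inf_le_left
  have hIN : I ⊆ NStar := fun p hp ↦ (mem_filterStar.1 (hIF hp)).trans hF
  have hbelow {X : Set ℕ} (hX : ∀ p ∈ I, X ∈ p) : ∃ i, A i ⊆ X := by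
    obtain ⟨i, hi⟩ := hdecides X
    have hAX : Thick (A i ∩ X) :=
      hI.2.1.thick hI.1 fun p hp ↦ inter_mem (hAI i p hp) (hX p hp)
    exact ⟨i, hi.resolve_right (not_not_intro hAX)⟩
  refine ⟨I, hI, hIN, (isPSetSub_iff (hIc.preimage continuous_subtype_val)).2 ?_⟩
  intro 𝓑 hcount h𝓑
  choose! i hi using fun B hB ↦ hbelow fun p hp ↦ h𝓑 B hB (a := ⟨p, hIN hp⟩) hp
  obtain ⟨j, hj⟩ := hbdd (i '' 𝓑) (hcount.image i)
  refine ⟨A j, fun p hp ↦ hAI j p hp, fun B hB ↦ ?_⟩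
  exact (hA.almostSub_of_le (hj (mem_image_of_mem i hB))).trans (almostSub_of_subset (hi B hB))

end Tower

lemma exists_forall_lt_rel {ι Q : Type*} [LinearOrder ι] [WellFoundedLT ι] [Nonempty Q]
    {P : ι → Q → Prop} {r : Q → Q → Prop}
    (hext : ∀ i (f : Iio i → Q), (∀ j : Iio i, P j (f j)) →
      (∀ j k, j < k → r (f k) (f j)) →
      ∃ q, P i q ∧ ∀ j, r q (f j)) :
    ∃ f : ι → Q, (∀ i, P i (f i)) ∧ ∀ i j, i < j → r (f j) (f i) := by
  let f : ι → Q := WellFoundedLT.fix fun i g ↦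
    Classical.epsilon fun q ↦ P i q ∧ ∀ j : Iio i, r q (g j j.2)
  have hf (i : ι) : P i (f i) ∧ ∀ j : Iio i, r (f i) (f j) := by
    induction i using WellFoundedLT.induction with
    | ind i ih =>
      have hspec := Classical.epsilon_spec <| hext i (fun j ↦ f j) (fun j ↦ (ih j j.2).1)
        fun j k hjk ↦ (ih k k.2).2 ⟨j, hjk⟩
      rwa [show f i = _ from WellFoundedLT.fix_eq _ i]
  exact ⟨f, fun i ↦ (hf i).1, fun i j hij ↦ (hf j).2 ⟨i, hij⟩⟩

section TowerNumber

variable {ι : Type}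

lemma IsTower.exists_infinite_almostSub [LinearOrder ι] {A : ι → Set ℕ} (hA : IsTower A)
    (hι : Cardinal.mk ι < towerNum) (hinf : ∀ i, (A i).Infinite) :
    ∃ B : Set ℕ, B.Infinite ∧ ∀ i, almostSub B (A i) := by
  by_contra hB
  refine notMem_of_lt_csInf' (Cardinal.mk_range_le.trans_lt hι)
    ⟨range A, rfl, forall_mem_range.2 hinf, ?_, by simpa only [forall_mem_range] using hB⟩
  rintro _ ⟨i, rfl⟩ _ ⟨j, rfl⟩ _
  exact (le_total i j).symm.imp hA.almostSub_of_le hA.almostSub_of_le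

lemma exists_sparse_subset {X : Set ℕ} (hX : X.Infinite) (g : ℕ → ℕ) :
    ∃ Y ⊆ X, Y.Infinite ∧ ∀ x ∈ Y, ∀ y ∈ Y, x < y → g x ≤ y := by
  obtain ⟨u, huX, hu⟩ := exists_seq_of_forall_finset_exists (· ∈ X) (fun x y ↦ x < y ∧ g x ≤ y)
    fun s _ ↦ by
      obtain ⟨y, hyX, hy⟩ := hX.exists_gt (s.sup fun x ↦ max x (g x))
      have hle (x : ℕ) (hx : x ∈ s) : max x (g x) < y :=
        (Finset.le_sup (f := fun x ↦ max x (g x)) hx).trans_lt hy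
      exact ⟨y, hyX, fun x hx ↦
        ⟨(le_max_left _ _).trans_lt (hle x hx), (le_max_right _ _).trans (hle x hx).le⟩⟩
  have hmono : StrictMono u := fun m n hmn ↦ (hu m n hmn).1
  refine ⟨range u, range_subset_iff.2 huX, infinite_range_of_injective hmono.injective, ?_⟩
  rintro _ ⟨m, rfl⟩ _ ⟨n, rfl⟩ hmn
  exact (hu m n (hmono.lt_iff_lt.1 hmn)).2

-- This is `𝔱 ≤ 𝔟`.
lemma exists_eventually_le_of_mk_lt_towerNum (hι : Cardinal.mk ι < towerNum) (g : ι → ℕ → ℕ) :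
    ∃ h : ℕ → ℕ, ∀ i, g i ≤ᶠ[atTop] h := by
  obtain ⟨_, _⟩ := exists_wellFoundedLT ι
  obtain ⟨X, hX, htower⟩ := exists_forall_lt_rel (ι := ι) (r := almostSub)
    (P := fun i Y ↦ Y.Infinite ∧ ∀ x ∈ Y, ∀ y ∈ Y, x < y → partialSups (g i) x ≤ y)
    fun i f hf hr ↦ by
      have hf_tower : IsTower f := hr
      obtain ⟨B, hB, hBf⟩ := hf_tower.exists_infinite_almostSub
        ((Cardinal.mk_set_le _).trans_lt hι) fun j ↦ (hf j).1
      obtain ⟨Y, hYB, hY⟩ := exists_sparse_subset hB (partialSups (g i))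
      exact ⟨Y, hY, fun j ↦ (almostSub_of_subset hYB).trans (hBf j)⟩
  obtain ⟨B, hB, hBX⟩ := IsTower.exists_infinite_almostSub htower hι fun i ↦ (hX i).1
  choose s hsB hs using hB.exists_gt
  refine ⟨fun x ↦ s (s x), fun i ↦ ?_⟩
  obtain ⟨N, hN⟩ := eventually_atTop.1 (almostSub_iff_eventually.1 (hBX i))
  filter_upwards [eventually_ge_atTop N] with x hx
  have hs₁ : s x ∈ X i := hN _ (hx.trans (hs x).le) (hsB x)
  have hs₂ : s (s x) ∈ X i := hN _ (hx.trans ((hs x).trans (hs _)).le) (hsB _)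
  calc g i x ≤ partialSups (g i) x := le_partialSups _ x
    _ ≤ partialSups (g i) (s x) := (partialSups (g i)).monotone (hs x).le
    _ ≤ s (s x) := (hX i).2 _ hs₁ _ hs₂ (hs _)

lemma exists_tendsto_atTop_forall_le (h : ℕ → ℕ) :
    ∃ r : ℕ → ℕ, Tendsto r atTop atTop ∧ ∀ x, ∀ n ≤ h x, r n ≤ x := by
  classical
  have hex (n : ℕ) : ∃ x, n ≤ h x + x := ⟨n, by omega⟩
  refine ⟨fun n ↦ Nat.find (hex n), tendsto_atTop.2 fun k ↦ ?_,
    fun x n hn ↦ Nat.find_min' _ (by omega)⟩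
  have hlarge : ∀ᶠ n in atTop, ∀ x ∈ Iio k, h x + x < n :=
    (eventually_all_finite (finite_Iio k)).2 fun x _ ↦ eventually_gt_atTop _
  filter_upwards [hlarge] with n hn
  exact (Nat.le_find_iff _ _).2 fun x hx ↦ not_le.2 (hn x hx)

lemma exists_tendsto_atTop_infinite_Icc_subset {A : ι → Set ℕ} (hι : Cardinal.mk ι < towerNum)
    (hthick : ∀ i, Thick (A i)) :
    ∃ r : ℕ → ℕ, Tendsto r atTop atTop ∧ ∀ i, {n | Icc n (n + r n) ⊆ A i}.Infinite := by
  choose g hxg hgA using fun i x ↦ (hthick i).exists_ge x x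
  obtain ⟨h, hgh⟩ := exists_eventually_le_of_mk_lt_towerNum hι g
  obtain ⟨r, hr, hrh⟩ := exists_tendsto_atTop_forall_le h
  refine ⟨r, hr, fun i ↦ Nat.frequently_atTop_iff_infinite.1 (frequently_atTop.2 fun N ↦ ?_)⟩
  obtain ⟨x, hx, hNx⟩ := ((hgh i).and (eventually_ge_atTop N)).exists
  have hrx : r (g i x) ≤ x := hrh x _ hx
  exact ⟨g i x, hNx.trans (hxg i x), (Icc_subset_Icc_right (by omega)).trans (hgA i x)⟩

lemma thick_biUnion_Icc {r : ℕ → ℕ} {B : Set ℕ} (hr : Tendsto r atTop atTop) (hB : B.Infinite) :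
    Thick (⋃ n ∈ B, Icc n (n + r n)) := by
  intro k
  obtain ⟨n, hnB, hn⟩ := ((Nat.frequently_atTop_iff_infinite.2 hB).and_eventually
    (hr.eventually_ge_atTop k)).exists
  exact ⟨n, (Icc_subset_Icc_right (by omega)).trans
    (subset_biUnion_of_mem (u := fun n ↦ Icc n (n + r n)) hnB)⟩

lemma IsTower.setOf_Icc_subset [LT ι] {A : ι → Set ℕ} (hA : IsTower A) (r : ℕ → ℕ) :
    IsTower fun i ↦ {n | Icc n (n + r n) ⊆ A i} := by
  intro i j hij
  obtain ⟨N, hN⟩ := eventually_atTop.1 (almostSub_iff_eventually.1 (hA hij))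
  exact almostSub_iff_eventually.2 <| eventually_atTop.2
    ⟨N, fun n hNn hn m hm ↦ hN m (hNn.trans hm.1) (hn hm)⟩

lemma almostSub_biUnion_Icc {r : ℕ → ℕ} {A B : Set ℕ}
    (hB : almostSub B {n | Icc n (n + r n) ⊆ A}) :
    almostSub (⋃ n ∈ B, Icc n (n + r n)) A := by
  refine (hB.biUnion fun n _ ↦ finite_Icc n (n + r n)).subset ?_
  rintro m ⟨hm, hmA⟩
  obtain ⟨n, hnB, hmn⟩ := mem_iUnion₂.1 hm
  exact mem_biUnion ⟨hnB, fun hn ↦ hmA (hn hmn)⟩ hmn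

lemma IsTower.exists_thick_almostSub [LinearOrder ι] {A : ι → Set ℕ} (hA : IsTower A)
    (hι : Cardinal.mk ι < towerNum) (hthick : ∀ i, Thick (A i)) :
    ∃ B, Thick B ∧ ∀ i, almostSub B (A i) := by
  obtain ⟨r, hr, hinf⟩ := exists_tendsto_atTop_infinite_Icc_subset hι hthick
  obtain ⟨B, hB, hBA⟩ := (hA.setOf_Icc_subset r).exists_infinite_almostSub hι hinf
  exact ⟨_, thick_biUnion_Icc hr hB, fun i ↦ almostSub_biUnion_Icc (hBA i)⟩

end TowerNumber

section Continuum

lemma bddAbove_of_countable {α : Type*} [LinearOrder α] (hα : Cardinal.aleph0 < Order.cof α)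
    {s : Set α} (hs : s.Countable) : BddAbove s := by
  have hcof : ¬ IsCofinal s := fun h ↦
    ((Order.cof_le h).trans hs.le_aleph0).not_gt hα
  obtain ⟨b, hb⟩ := not_isCofinal_iff.1 hcof
  exact ⟨b, fun a ha ↦ (hb a ha).le⟩

lemma aleph0_lt_cof_continuum :
    Cardinal.aleph0 < Order.cof Cardinal.continuum.{0}.ord.ToType := by
  rw [Ordinal.cof_toType, ← Cardinal.two_power_aleph0]
  exact Cardinal.lt_cof_ord_power le_rfl Cardinal.one_lt_two

lemma exists_isTower_thick_decides (h : Cardinal.continuum ≤ towerNum) :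
    ∃ A : Cardinal.continuum.{0}.ord.ToType → Set ℕ, IsTower A ∧ (∀ i, Thick (A i)) ∧
      ∀ X, ∃ i, A i ⊆ X ∨ ¬ Thick (A i ∩ X) := by
  let W : Type := Cardinal.continuum.ord.ToType
  have hW : Cardinal.mk W = Cardinal.continuum := Cardinal.mk_ord_toType _
  have hIio (i : W) : Cardinal.mk (Iio i) < towerNum :=
    ((Cardinal.mk_Iio_lt i (by simp [W])).trans_eq hW).trans_le h
  obtain ⟨e⟩ : Nonempty (W ≃ Set ℕ) := by simp [← Cardinal.eq, hW]
  obtain ⟨A, hA, htower⟩ := exists_forall_lt_rel (ι := W) (r := almostSub)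
    (P := fun i B ↦ Thick B ∧ (B ⊆ e i ∨ ¬ Thick (B ∩ e i))) fun i f hf hr ↦ by
      have hf_tower : IsTower f := hr
      obtain ⟨B, hB, hBf⟩ := hf_tower.exists_thick_almostSub (hIio i) fun j ↦ (hf j).1
      by_cases hBe : Thick (B ∩ e i)
      · exact ⟨B ∩ e i, ⟨hBe, .inl inter_subset_right⟩, fun j ↦
          (almostSub_of_subset inter_subset_left).trans (hBf j)⟩
      · exact ⟨B, ⟨hB, .inr hBe⟩, hBf⟩
  refine ⟨A, htower, fun i ↦ (hA i).1, fun X ↦ ⟨e.symm X, ?_⟩⟩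
  simpa using (hA (e.symm X)).2

lemma exists_isMinRightIdeal_isPSetIn (h : Cardinal.continuum ≤ towerNum) :
    ∃ I, IsMinRightIdeal I ∧ IsPSetIn I := by
  obtain ⟨A, hA, hthick, hdecides⟩ := exists_isTower_thick_decides h
  exact hA.exists_isMinRightIdeal_isPSetIn hthick hdecides fun _ hs ↦
    bddAbove_of_countable aleph0_lt_cof_continuum hs

end Continuum

/-- If `𝔱 = 𝔠` then there are minimal right ideals `I, J` of
`(βℕ, +)` with `I` a `P`-set in `ℕ*` and `J` not a `P`-set; consequently no
autohomeomorphism of `ℕ*` maps `I` onto `J`. -/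
theorem stmt9 (h : towerNum = Cardinal.continuum) :
    ∃ I J : Set βN, IsMinRightIdeal I ∧ IsMinRightIdeal J ∧
      IsPSetIn I ∧ ¬ IsPSetIn J ∧
      ∀ e : ↥NStar ≃ₜ ↥NStar,
        e '' (Subtype.val ⁻¹' I) ≠ (Subtype.val ⁻¹' J : Set ↥NStar) := by
  obtain ⟨I, hI, hIP⟩ := exists_isMinRightIdeal_isPSetIn h.ge
  obtain ⟨J, hJ, hJN, hJP⟩ := exists_isMinRightIdeal_not_isPSetIn
  exact ⟨I, J, hI, hJ, hIP, hJP, fun e he ↦ hJP ⟨hJN, he ▸ hIP.2.image e⟩⟩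

end
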